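/- arXiv:2402.19374 — 2 statements merged into one kernel-verified Lean document; each statement's English description precedes it below -/
import Mathlib

section
/- In any unital ring R, every commutator [e, x] with e idempotent and x ∈ R lies in the additive subgroup generated by the units of R; hence [E(R), R] ⊆ U(R)^+. -/
/-!
For an idempotent `e`, the elements `e * x * (1 - e)` and `(1 - e) * x * e` square to zero, so adding
`1` to either gives a unit, and the difference of these two units is `e * x - x * e`. Since
`a ↦ a * r - r * a` is additive, the case of a sum of idempotents follows.
-/

lemma isUnit_one_add_of_mul_self_eq_zero {R : Type*} [Ring R] {n : R} (h : n * n = 0) :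
    IsUnit (1 + n) :=
  IsNilpotent.isUnit_one_add ⟨2, by rw [pow_two, h]⟩

lemma idempotent_commutator_mem {R : Type*} [Ring R] (e x : R) (he : IsIdempotentElem e) :
    e * x - x * e ∈ AddSubgroup.closure {u : R | IsUnit u} := by
  have h₁ : (e * x * (1 - e)) * (e * x * (1 - e)) = 0 := by
    calc _ = e * x * ((1 - e) * e) * (x * (1 - e)) := by simp only [mul_assoc]
      _ = 0 := by rw [he.one_sub_mul_self, mul_zero, zero_mul]
  have h₂ : ((1 - e) * x * e) * ((1 - e) * x * e) = 0 := by
    calc _ = (1 - e) * x * (e * (1 - e)) * (x * e) := by simp only [mul_assoc]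
      _ = 0 := by rw [he.mul_one_sub_self, mul_zero, zero_mul]
  have h : e * x - x * e = (1 + e * x * (1 - e)) - (1 + (1 - e) * x * e) := by
    noncomm_ring
  rw [h]
  exact sub_mem (AddSubgroup.subset_closure (isUnit_one_add_of_mul_self_eq_zero h₁))
    (AddSubgroup.subset_closure (isUnit_one_add_of_mul_self_eq_zero h₂))

theorem stmt3 {R : Type*} [Ring R] :
    (∀ e x : R, IsIdempotentElem e →
      e * x - x * e ∈ AddSubgroup.closure {u : R | IsUnit u}) ∧
    AddSubgroup.closure {z : R | ∃ a ∈ AddSubgroup.closure {e : R | IsIdempotentElem e},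
        ∃ r : R, z = a * r - r * a} ≤
      AddSubgroup.closure {u : R | IsUnit u} := by
  refine ⟨idempotent_commutator_mem, ?_⟩
  rw [AddSubgroup.closure_le]
  rintro _ ⟨a, ha, r, rfl⟩
  rw [SetLike.mem_coe]
  induction ha using AddSubgroup.closure_induction with
  | mem e he => exact idempotent_commutator_mem e r he
  | zero => simp
  | add a b _ _ iha ihb =>
    have h : (a + b) * r - r * (a + b) = (a * r - r * a) + (b * r - r * b) := by noncomm_ring
    rw [h]
    exact add_mem iha ihb
  | neg a _ iha =>
    have h : -a * r - r * -a = -(a * r - r * a) := by noncomm_ring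
    rw [h]
    exact neg_mem iha
end

section
/- Let R be a semiprime ring and L a Lie ideal of R. If a ∈ R satisfies aLa = 0 (axa = 0 for all x ∈ L), then [a, L] = 0, i.e., a commutes with every element of L. -/
/-!
Write `w = x * a - a * x` for `x ∈ L`. Since `a[x, y]a = 0` for every `y`, the Leibniz rule applied
to `[x, r * a * s]` leaves only its middle term, so `a R w R a = 0`. Semiprimeness gives first
`a R w = 0`, then `w R a = 0`, and finally `w R w = 0` because `w` is itself a commutator with `a`;
hence `w = 0`.
-/

theorem stmt15 {R : Type*} [Ring R]
    (hsp : ∀ x : R, (∀ r : R, x * r * x = 0) → x = 0)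
    (L : AddSubgroup R) (hL : ∀ x ∈ L, ∀ r : R, x * r - r * x ∈ L)
    (a : R) (ha : ∀ x ∈ L, a * x * a = 0) :
    ∀ x ∈ L, a * x = x * a := by
  intro x hx
  have hc : ∀ r, a * (x * r - r * x) * a = 0 := fun r => ha _ (hL x hx r)
  obtain ⟨w, hw⟩ : ∃ w, w = x * a - a * x := ⟨_, rfl⟩
  have h1 : ∀ r s, a * r * w * s * a = 0 := by
    intro r s
    have e : a * r * w * s * a = a * (x * (r * a * s) - (r * a * s) * x) * a
        - a * (x * r - r * x) * a * (s * a) - a * r * (a * (x * s - s * x) * a) := by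
      rw [hw]; noncomm_ring
    rw [e, hc, hc, hc]; simp
  have h2 : ∀ r, a * r * w = 0 := by
    intro r
    refine hsp _ fun s => ?_
    have e : a * r * w * s * (a * r * w) = a * r * w * s * a * (r * w) := by noncomm_ring
    rw [e, h1, zero_mul]
  have h3 : ∀ r, w * r * a = 0 := by
    intro r
    refine hsp _ fun s => ?_
    have e : w * r * a * s * (w * r * a) = w * r * (a * s * w) * (r * a) := by noncomm_ring
    rw [e, h2]; simp
  have h4 : w = 0 := by
    refine hsp _ fun r => ?_
    have e : w * r * w = w * (r * x) * a - w * r * a * x := by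
      nth_rewrite 2 [hw]
      noncomm_ring
    rw [e, h3, h3]; simp
  rw [hw] at h4
  exact (sub_eq_zero.mp h4).symm
end
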